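/- arXiv:1311.6399 — 4 statements merged into one kernel-verified Lean document; each statement's English description precedes it below -/
import Mathlib

section
/- Suppose u : ℝ × [0,∞) → ℝ is smooth and satisfies the integro-differential equation u_t − ε u_xx + a u + b ∫₀^t e^{−β(t−τ)} u(x,τ) dτ = −∫₀^t e^{−(t−τ)/ε} f₁(x,τ) dτ for all x and t > 0, where f₁(x,t) = e^{−λx/2}·( sin( e^{λx/2} u(x,t) ) − γ ). Then u satisfies the third-order equation ε u_xxt − u_tt + u_xx − (α + ε λ²/4) u_t − (λ²/4) u = f₁ for all x and t > 0. -/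
/-!
Write the equation as `u_t − ε u_xx + a u = −J`, where `J(t) = ∫₀ᵗ e^{−β(t−τ)} (b u + f₁)(x,τ) dτ`
(both memory kernels agree because `β = 1/ε`). The convolution satisfies the linear ODE
`J' = (b u + f₁) − β J` (`hasDerivAt_expConv`), so differentiating the equation in `t` and
eliminating `J` with the equation itself gives
`u_tt − ε u_xxt + a u_t = −b u − f₁ − β (u_t − ε u_xx + a u)`.
This is the claim, since `β ε = 1`, `a + β = α + ε λ²/4` and `b + a β = λ²/4`.
Smoothness of the partial derivatives as functions on the plane (`contDiff_partial_fst`,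
`contDiff_partial_snd`) justifies the differentiation.
-/

/-- The exponential convolution solves `J' = g − β J`: after factoring out `e^{−βt}` this is the
product rule together with the fundamental theorem of calculus. -/
theorem hasDerivAt_expConv (β : ℝ) (g : ℝ → ℝ) (hg : Continuous g) (t : ℝ) :
    HasDerivAt (fun s : ℝ => ∫ τ in (0:ℝ)..s, Real.exp (-β * (s - τ)) * g τ)
      (g t - β * ∫ τ in (0:ℝ)..t, Real.exp (-β * (t - τ)) * g τ) t := by
  have hfac : ∀ s : ℝ, (∫ τ in (0:ℝ)..s, Real.exp (-β * (s - τ)) * g τ)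
      = Real.exp (-β * s) * ∫ τ in (0:ℝ)..s, Real.exp (β * τ) * g τ := by
    intro s
    rw [← intervalIntegral.integral_const_mul]
    congr 1
    funext τ
    rw [← mul_assoc, ← Real.exp_add]
    ring_nf
  have hcont : Continuous fun τ : ℝ => Real.exp (β * τ) * g τ := by fun_prop
  have hint : HasDerivAt (fun s : ℝ => ∫ τ in (0:ℝ)..s, Real.exp (β * τ) * g τ)
      (Real.exp (β * t) * g t) t :=
    intervalIntegral.integral_hasDerivAt_right (hcont.intervalIntegrable _ _)
      (hcont.stronglyMeasurableAtFilter _ _) hcont.continuousAt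
  have hexp : HasDerivAt (fun s : ℝ => Real.exp (-β * s)) (Real.exp (-β * t) * (-β * 1)) t :=
    ((hasDerivAt_id t).const_mul (-β)).exp
  have hone : Real.exp (-β * t) * Real.exp (β * t) = 1 := by
    rw [← Real.exp_add]
    simp
  simp only [hfac]
  refine (hexp.mul hint).congr_deriv ?_
  linear_combination g t * hone

theorem contDiff_partial_fst (F : ℝ → ℝ → ℝ)
    (hF : ContDiff ℝ (⊤ : ℕ∞) (fun p : ℝ × ℝ => F p.1 p.2)) :
    ContDiff ℝ (⊤ : ℕ∞) (fun p : ℝ × ℝ => deriv (fun y : ℝ => F y p.2) p.1) := by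
  have h : (fun p : ℝ × ℝ => deriv (fun y : ℝ => F y p.2) p.1)
      = fun p : ℝ × ℝ => fderiv ℝ (fun p : ℝ × ℝ => F p.1 p.2) p (1, 0) := by
    funext p
    have hd := (hF.differentiable (by simp) p).hasFDerivAt
    exact (hd.comp_hasDerivAt p.1 ((hasDerivAt_id p.1).prodMk (hasDerivAt_const p.1 p.2))).deriv
  rw [h]
  exact (hF.fderiv_right (m := (⊤ : ℕ∞)) (by simp)).clm_apply contDiff_const

theorem contDiff_partial_snd (F : ℝ → ℝ → ℝ)
    (hF : ContDiff ℝ (⊤ : ℕ∞) (fun p : ℝ × ℝ => F p.1 p.2)) :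
    ContDiff ℝ (⊤ : ℕ∞) (fun p : ℝ × ℝ => deriv (F p.1) p.2) := by
  have h : (fun p : ℝ × ℝ => deriv (F p.1) p.2)
      = fun p : ℝ × ℝ => fderiv ℝ (fun p : ℝ × ℝ => F p.1 p.2) p (0, 1) := by
    funext p
    have hd := (hF.differentiable (by simp) p).hasFDerivAt
    exact (hd.comp_hasDerivAt p.2 ((hasDerivAt_const p.2 p.1).prodMk (hasDerivAt_id p.2))).deriv
  rw [h]
  exact (hF.fderiv_right (m := (⊤ : ℕ∞)) (by simp)).clm_apply contDiff_const

/-- Freezing `x` in a smooth function of `(x, t)` leaves a differentiable function of `t`. -/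
theorem differentiable_slice (F : ℝ → ℝ → ℝ)
    (hF : ContDiff ℝ (⊤ : ℕ∞) (fun p : ℝ × ℝ => F p.1 p.2)) (x : ℝ) :
    Differentiable ℝ (F x) :=
  (hF.differentiable (by simp)).comp
    ((differentiable_const x).prodMk differentiable_id)


open Real MeasureTheory Set intervalIntegral

/-- if a smooth `u` satisfies the integro-differential equation
`u_t − ε u_xx + a u + b ∫₀^t e^{−β(t−τ)} u dτ = −∫₀^t e^{−(t−τ)/ε} f₁ dτ`
with `f₁(x,t) = e^{−λx/2}(sin(e^{λx/2} u) − γ)`, then `u` satisfies the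
third-order equation `ε u_xxt − u_tt + u_xx − (α + ελ²/4) u_t − (λ²/4) u = f₁`. -/
theorem integro_implies_third_order (ε α lam γ : ℝ)
    (hε : 0 < ε) (hα : 0 < α) (hlam : 0 < lam) (hαε : α * ε < 1)
    (β b a : ℝ) (hβ : β = 1 / ε) (hb : b = β ^ 2 * (1 - α * ε))
    (ha' : a = (lam ^ 2 / 4 - b) / β) (ha : 0 < a)
    (u : ℝ → ℝ → ℝ) (hu : ContDiff ℝ (⊤ : ℕ∞) (fun p : ℝ × ℝ => u p.1 p.2))
    (f1 : ℝ → ℝ → ℝ)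
    (hf1 : ∀ x t : ℝ, f1 x t
      = Real.exp (-lam * x / 2) * (Real.sin (Real.exp (lam * x / 2) * u x t) - γ))
    (heq : ∀ x : ℝ, ∀ t : ℝ, 0 < t →
      deriv (u x) t
        - ε * deriv (fun y : ℝ => deriv (fun y' : ℝ => u y' t) y) x
        + a * u x t
        + b * ∫ τ in (0:ℝ)..t, Real.exp (-β * (t - τ)) * u x τ
      = - ∫ τ in (0:ℝ)..t, Real.exp (-(t - τ) / ε) * f1 x τ) :
    ∀ x : ℝ, ∀ t : ℝ, 0 < t →
      ε * deriv (fun τ : ℝ => deriv (fun y : ℝ => deriv (fun y' : ℝ => u y' τ) y) x) t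
        - deriv (deriv (u x)) t
        + deriv (fun y : ℝ => deriv (fun y' : ℝ => u y' t) y) x
        - (α + ε * lam ^ 2 / 4) * deriv (u x) t
        - (lam ^ 2 / 4) * u x t
      = f1 x t := by
  intro x t ht
  have hβε : β * ε = 1 := by
    rw [hβ]
    field_simp
  have hβ0 : β ≠ 0 := left_ne_zero_of_mul_eq_one hβε
  have haβ : a * β = lam ^ 2 / 4 - b := by
    rw [ha']
    field_simp
  have hsum : a + β = α + ε * lam ^ 2 / 4 := by
    linear_combination (-a - β + α + α * β * ε) * hβε + ε * haβ - ε * hb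
  have hxx := contDiff_partial_fst
    (fun x τ => deriv (fun y : ℝ => u y τ) x) (contDiff_partial_fst u hu)
  have hu_t : Differentiable ℝ (u x) := differentiable_slice u hu x
  have hut_t : Differentiable ℝ (deriv (u x)) :=
    differentiable_slice (fun x t => deriv (u x) t) (contDiff_partial_snd u hu) x
  have huxx_t : Differentiable ℝ
      (fun τ : ℝ => deriv (fun y : ℝ => deriv (fun y' : ℝ => u y' τ) y) x) :=
    differentiable_slice
      (fun x τ => deriv (fun y : ℝ => deriv (fun y' : ℝ => u y' τ) y) x) hxx x
  have huc : Continuous (u x) := hu_t.continuous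
  have hfc : Continuous (f1 x) := by
    have : f1 x = fun t => Real.exp (-lam * x / 2)
        * (Real.sin (Real.exp (lam * x / 2) * u x t) - γ) := funext (hf1 x)
    rw [this]
    fun_prop
  have hker : ∀ s : ℝ, (∫ τ in (0:ℝ)..s, Real.exp (-(s - τ) / ε) * f1 x τ)
      = ∫ τ in (0:ℝ)..s, Real.exp (-β * (s - τ)) * f1 x τ := by
    intro s
    congr 1
    funext τ
    rw [hβ]
    ring_nf
  have hL := (((hut_t t).hasDerivAt.sub ((huxx_t t).hasDerivAt.const_mul ε)).add
    ((hu_t t).hasDerivAt.const_mul a)).add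
      ((hasDerivAt_expConv β (u x) huc t).const_mul b)
  have hR := (hasDerivAt_expConv β (f1 x) hfc t).neg
  -- The equation holds only for positive times, hence on a neighbourhood of `t`.
  have hEv := hR.congr_of_eventuallyEq
    (Filter.eventually_of_mem (Ioi_mem_nhds ht) fun s hs => (heq x s hs).trans
      (congrArg Neg.neg (hker s)))
  have hD := hL.unique hEv
  have h0 := heq x t ht
  rw [hker t] at h0
  linear_combination (-1 : ℝ) * hD - β * h0 + deriv (u x) t * hsum + u x t * haβ
    - deriv (fun y : ℝ => deriv (fun y' : ℝ => u y' t) y) x * hβε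
end

section
/- Let ε > 0, L > 0, δ > 0 and let x satisfy δ ≤ x ≤ 2L − δ. Then for every t > 0, Σ_{n∈ℤ} e^{−(x + 2nL)²/(4 ε t)} ≤ t · (ε π² / (L² e)) · csc²( π δ / (2L) ), where csc denotes the cosecant and e is Euler's number. -/
open Real

/-!
Since `u * exp (-u) ≤ exp (-1)`, each term is at most `4εt / (e (x + 2nL)²)`, so with
`y = x / (2L)` the claim reduces to `∑ 1 / (y + n)² ≤ π² / sin² (π y)` and to
`sin (πδ/(2L)) ≤ sin (π y)`, which holds because `π y` lies between `a` and `π - a`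
for `a = πδ/(2L)`.

The bound on the inverse squares is needed only for finite partial sums. It is proved for the
windows `-2 ^ m ≤ n < 2 ^ m` by induction on `m`: the duplication formula
`1 / sin² θ = (1 / sin² (θ/2) + 1 / sin² ((θ + π)/2)) / 4` for the right side matches the
splitting of the left side into even and odd `n`, and `sin² u ≤ u²` gives the base case.
-/

lemma csc_sq_duplication (y : ℝ) (hy : sin (π * y) ≠ 0) :
    sin (π * (y / 2)) ≠ 0 ∧ sin (π * ((y + 1) / 2)) ≠ 0 ∧
    π ^ 2 / sin (π * y) ^ 2 =
      (π ^ 2 / sin (π * (y / 2)) ^ 2 + π ^ 2 / sin (π * ((y + 1) / 2)) ^ 2) / 4 := by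
  have h1 : sin (π * y) = 2 * sin (π * (y / 2)) * cos (π * (y / 2)) := by
    rw [← sin_two_mul]; ring_nf
  have h2 : sin (π * ((y + 1) / 2)) = cos (π * (y / 2)) := by
    rw [← sin_add_pi_div_two]; ring_nf
  rw [h1] at hy
  have hs : sin (π * (y / 2)) ≠ 0 := by
    intro h; simp [h] at hy
  have hc : cos (π * (y / 2)) ≠ 0 := by
    intro h; simp [h] at hy
  refine ⟨hs, h2 ▸ hc, ?_⟩
  rw [h1, h2]
  have := sin_sq_add_cos_sq (π * (y / 2))
  generalize sin (π * (y / 2)) = p at *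
  generalize cos (π * (y / 2)) = q at *
  field_simp
  linear_combination (-4 : ℝ) * this

lemma inv_sq_le_csc_sq (u : ℝ) (hu : sin (π * u) ≠ 0) :
    1 / u ^ 2 ≤ π ^ 2 / sin (π * u) ^ 2 := by
  have hu0 : u ≠ 0 := by
    rintro rfl; simp at hu
  have h : sin (π * u) ^ 2 ≤ (π * u) ^ 2 := sq_le_sq.2 abs_sin_le_abs
  rw [div_le_div_iff₀ (by positivity) (by positivity)]
  linarith [mul_pow π u 2]

/-- The window `-2 ^ m ≤ n < 2 ^ m`, with `n = k` and `n = -1 - k` paired. -/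
lemma window_le_csc_sq (m : ℕ) : ∀ y : ℝ, sin (π * y) ≠ 0 →
    ∑ k ∈ Finset.range (2 ^ m), (1 / (y + k) ^ 2 + 1 / (y - 1 - k) ^ 2)
      ≤ π ^ 2 / sin (π * y) ^ 2 := by
  induction m with
  | zero =>
    intro y hy
    obtain ⟨h1, h2, h3⟩ := csc_sq_duplication y hy
    have h4 : sin (π * ((y - 1) / 2)) ^ 2 = sin (π * ((y + 1) / 2)) ^ 2 := by
      have : π * ((y - 1) / 2) = π * ((y + 1) / 2) - π := by ring
      rw [this, sin_sub_pi, neg_sq]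
    have h5 : sin (π * ((y - 1) / 2)) ≠ 0 := by
      rw [← pow_ne_zero_iff two_ne_zero, h4]
      exact pow_ne_zero 2 h2
    have h6 := inv_sq_le_csc_sq _ h1
    have h7 := inv_sq_le_csc_sq _ h5
    rw [h4] at h7
    have e1 : 1 / y ^ 2 = 1 / (y / 2) ^ 2 / 4 := by
      rw [div_pow, one_div_div]; ring
    have e2 : 1 / (y - 1) ^ 2 = 1 / ((y - 1) / 2) ^ 2 / 4 := by
      rw [div_pow, one_div_div]; ring
    simp only [pow_zero, Finset.range_one, Finset.sum_singleton, Nat.cast_zero, add_zero, sub_zero]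
    rw [e1, e2, h3]
    linarith
  | succ m ih =>
    intro y hy
    obtain ⟨h1, h2, h3⟩ := csc_sq_duplication y hy
    have split : ∀ (f : ℕ → ℝ) (M : ℕ), ∑ k ∈ Finset.range (M * 2), f k
        = ∑ j ∈ Finset.range M, (f (2 * j) + f (2 * j + 1)) := by
      intro f M
      induction M with
      | zero => simp
      | succ M ihM =>
        rw [Nat.succ_mul, Finset.sum_range_succ, Finset.sum_range_succ, ihM,
          Finset.sum_range_succ, mul_comm M 2]
        ring
    rw [pow_succ, split, h3]
    have key : ∀ v : ℝ, 1 / v ^ 2 = 1 / (v / 2) ^ 2 / 4 := by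
      intro v
      rw [div_pow, one_div_div]; ring
    calc _ = (∑ k ∈ Finset.range (2 ^ m), (1 / (y / 2 + k) ^ 2 + 1 / (y / 2 - 1 - k) ^ 2)
          + ∑ k ∈ Finset.range (2 ^ m),
            (1 / ((y + 1) / 2 + k) ^ 2 + 1 / ((y + 1) / 2 - 1 - k) ^ 2)) / 4 := by
          rw [← Finset.sum_add_distrib, Finset.sum_div]
          refine Finset.sum_congr rfl fun j _ => ?_
          push_cast
          rw [key (y + 2 * j), key (y - 1 - 2 * j), key (y + (2 * j + 1)),
            key (y - 1 - (2 * j + 1))]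
          ring_nf
      _ ≤ _ := by linarith [ih _ h1, ih _ h2]

lemma finset_sum_inv_sq_le_csc_sq (y : ℝ) (hy : sin (π * y) ≠ 0) (s : Finset ℤ) :
    ∑ n ∈ s, 1 / (y + n) ^ 2 ≤ π ^ 2 / sin (π * y) ^ 2 := by
  have window : ∀ M : ℕ, ∑ n ∈ Finset.Ico (-(M : ℤ)) M, 1 / (y + n) ^ 2
      = ∑ k ∈ Finset.range M, (1 / (y + k) ^ 2 + 1 / (y - 1 - k) ^ 2) := by
    intro M
    induction M with
    | zero => simp
    | succ M ih =>
      have h : Finset.Ico (-((M + 1 : ℕ) : ℤ)) ((M + 1 : ℕ) : ℤ)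
          = insert (-1 - (M : ℤ)) (insert (M : ℤ) (Finset.Ico (-(M : ℤ)) M)) := by
        ext n
        simp only [Finset.mem_Ico, Finset.mem_insert]
        push_cast
        omega
      rw [h, Finset.sum_insert, Finset.sum_insert, ih, Finset.sum_range_succ]
      · push_cast
        ring_nf
      · simp
      · simp only [Finset.mem_Ico, Finset.mem_insert]
        omega
  obtain ⟨M, hM⟩ : ∃ M : ℕ, ∀ n ∈ s, n.natAbs < M :=
    ⟨s.sup Int.natAbs + 1, fun n hn => Nat.lt_succ_of_le (Finset.le_sup (f := Int.natAbs) hn)⟩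
  have hsub : s ⊆ Finset.Ico (-((2 ^ M : ℕ) : ℤ)) ((2 ^ M : ℕ) : ℤ) := by
    intro n hn
    have h1 := hM n hn
    have h2 : M < 2 ^ M := Nat.lt_two_pow_self
    rw [Finset.mem_Ico]
    omega
  calc _ ≤ ∑ n ∈ Finset.Ico (-((2 ^ M : ℕ) : ℤ)) ((2 ^ M : ℕ) : ℤ), 1 / (y + n) ^ 2 :=
        Finset.sum_le_sum_of_subset_of_nonneg hsub fun _ _ _ => by positivity
    _ ≤ _ := by
        rw [window]
        exact window_le_csc_sq M y hy

/-- for `δ ≤ x ≤ 2L − δ` and `t > 0`,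
`Σ_{n∈ℤ} e^{−(x+2nL)²/(4εt)} ≤ t·(επ²/(L²e))·csc²(πδ/(2L))`. -/
theorem gaussian_sum_estimate (ε L δ x : ℝ)
    (hε : 0 < ε) (hL : 0 < L) (hδ : 0 < δ)
    (hx1 : δ ≤ x) (hx2 : x ≤ 2 * L - δ)
    (t : ℝ) (ht : 0 < t) :
    ∑' n : ℤ, Real.exp (-(x + 2 * (n : ℝ) * L) ^ 2 / (4 * ε * t))
      ≤ t * (ε * Real.pi ^ 2 / (L ^ 2 * Real.exp 1))
          * (1 / Real.sin (Real.pi * δ / (2 * L))) ^ 2 := by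
  set y : ℝ := x / (2 * L) with hy
  set a : ℝ := π * δ / (2 * L) with ha
  have ha0 : 0 < a := by positivity
  have hay : a ≤ π * y := by
    rw [ha, hy, ← mul_div_assoc]
    gcongr
  have hya : π * y ≤ π - a := by
    have : π - a = π * ((2 * L - δ) / (2 * L)) := by
      rw [ha]; field_simp
    rw [this, hy]
    gcongr
  have hsa : 0 < sin a := sin_pos_of_pos_of_lt_pi ha0 (by linarith)
  have hle : sin a ≤ sin (π * y) := by
    -- `sin` increases on `[-π/2, π/2]`; the other half follows by reflection about `π/2`.
    rcases le_total (π * y) (π / 2) with h | h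
    · exact sin_le_sin_of_le_of_le_pi_div_two (by linarith) h hay
    · rw [← sin_pi_sub (π * y)]
      exact sin_le_sin_of_le_of_le_pi_div_two (by linarith) (by linarith) (by linarith)
  have hsy : 0 < sin (π * y) := hsa.trans_le hle
  have term : ∀ n : ℤ, exp (-(x + 2 * (n : ℝ) * L) ^ 2 / (4 * ε * t))
      ≤ ε * t / (L ^ 2 * exp 1) * (1 / (y + n) ^ 2) := by
    intro n
    have hyn : y + n ≠ 0 := by
      intro h
      apply hsy.ne'
      rw [eq_neg_of_add_eq_zero_left h, mul_neg, sin_neg, mul_comm, sin_int_mul_pi, neg_zero]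
    have hxy : x + 2 * (n : ℝ) * L = 2 * L * (y + n) := by
      rw [hy]; field_simp
    set u : ℝ := L ^ 2 * (y + n) ^ 2 / (ε * t) with hu
    have hu0 : 0 < u := by positivity
    have e1 : -(x + 2 * (n : ℝ) * L) ^ 2 / (4 * ε * t) = -u := by
      rw [hxy, hu]; field_simp; ring
    have e2 : ε * t / (L ^ 2 * exp 1) * (1 / (y + n) ^ 2) = 1 / (u * exp 1) := by
      rw [hu]; field_simp
    rw [e1, e2, le_div_iff₀ (by positivity)]
    have h1 : u * exp 1 ≤ exp u := by
      have h2 := add_one_le_exp (u - 1)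
      calc u * exp 1 ≤ exp (u - 1) * exp 1 := by gcongr; linarith
        _ = exp u := by rw [← exp_add]; ring_nf
    calc exp (-u) * (u * exp 1) ≤ exp (-u) * exp u := by gcongr
      _ = 1 := by rw [← exp_add]; simp
  refine tsum_le_of_sum_le' (by positivity) fun s => ?_
  calc _ ≤ ∑ n ∈ s, ε * t / (L ^ 2 * exp 1) * (1 / (y + n) ^ 2) :=
        Finset.sum_le_sum fun n _ => term n
    _ = ε * t / (L ^ 2 * exp 1) * ∑ n ∈ s, 1 / (y + n) ^ 2 := by rw [Finset.mul_sum]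
    _ ≤ ε * t / (L ^ 2 * exp 1) * (π ^ 2 / sin (π * y) ^ 2) := by
        gcongr
        exact finset_sum_inv_sq_le_csc_sq y hsy.ne' s
    _ ≤ ε * t / (L ^ 2 * exp 1) * (π ^ 2 / sin a ^ 2) := by gcongr
    _ = _ := by rw [one_div, inv_pow]; ring
end

section
/- There exists a positive constant C, depending only on a, ε, b, β and L, such that for every x with 0 < x ≤ L one has ∫₀^∞ |θ_x(x,τ)| dτ ≤ C. -/
/-!
The estimate rests on Lipschitz bounds in `x`, which control the derivative of `θ` directly: for
`q` near `x`, `|θ(q,t) - θ(x,t)| ≤ G(x,t) |q - x|` gives `|θ_x(x,t)| ≤ G(x,t)`, with no need to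
differentiate under the sum or the integral, and it remains to integrate `G` in `t`.

* Poisson's formula `J₁(z) = (z/π) ∫₀^π cos (z sin θ) cos² θ dθ` (`J1_eq_integral`) gives
  `|J₁(z)| ≤ |z|/2` (`abs_J1_le`). Hence the factor `J₁(2√(b y (t-y))) / √(t-y)` of the memory
  term is at most `√b √y`, and that term needs only a bound on `√s ∂ₓ exp (-x²/(4εs) - as)`
  (`Kfun_lip`); the remaining exponentials combine to at most `exp (-min(a,β) t)`.
* For `w²/(4εs) = v²`, `v (1 + v²) exp (-v²) ≤ 1` yields derivative bounds for the Gaussian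
  factor that decay like `1/R²` when `|w| ≥ R` (`gauss_lip`). An image `n ≠ 0` stays at distance at
  least `|n| L / 2` from the singularity, so these images sum like `∑ 1/n²`
  (`Kfun_lip_far`, `abs_thetaX_le`).
* For `n = 0` the Gaussian contributes a constant multiple of `x / (√t (4εt + x²/4))`, whose
  integral over `t > 0` is an arctangent independent of `x` (`near_integral`).
-/

open Real MeasureTheory Set Filter Topology intervalIntegral

/-- Bessel function of the first kind of order 1, via its power series. -/
noncomputable def J1 (z : ℝ) : ℝ :=
  ∑' k : ℕ, ((-1 : ℝ) ^ k / ((Nat.factorial k : ℝ) * (Nat.factorial (k + 1) : ℝ)))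
      * (z / 2) ^ (2 * k + 1)

/-- The fundamental solution `K(x,t)` of the integro-differential operator. -/
noncomputable def Kfun (ε a b β : ℝ) (x t : ℝ) : ℝ :=
  (1 / (2 * Real.sqrt (Real.pi * ε))) *
    (Real.exp (-(|x| / Real.sqrt ε) ^ 2 / (4 * t) - a * t) / Real.sqrt t
      - b * ∫ y in (0:ℝ)..t,
          (Real.exp (-(|x| / Real.sqrt ε) ^ 2 / (4 * y) - a * y) / Real.sqrt (t - y))
            * Real.exp (-β * (t - y)) * J1 (2 * Real.sqrt (b * y * (t - y))))

/-- The theta function `θ(x,t) = Σ_{n ∈ ℤ} K(x + 2nL, t)`. -/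
noncomputable def theta (ε a b β L : ℝ) (x t : ℝ) : ℝ :=
  ∑' n : ℤ, Kfun ε a b β (x + 2 * (n : ℝ) * L) t

/-- The partial derivative of `θ` with respect to `x`. -/
noncomputable def thetaX (ε a b β L : ℝ) (x t : ℝ) : ℝ :=
  deriv (fun y : ℝ => theta ε a b β L y t) x

/-! ### The Bessel function `J₁` -/

/-- Poisson's integral representation, obtained by integrating the cosine series termwise with the
Wallis integrals `∫ sin ^ (2 * k)`. -/
lemma J1_eq_integral (z : ℝ) :
    J1 z = z / π * ∫ θ in (0 : ℝ)..π, cos (z * sin θ) * cos θ ^ 2 := by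
  let f : ℕ → C(ℝ, ℝ) := fun k =>
    ⟨fun θ => ((-1) ^ k * (z * sin θ) ^ (2 * k) / (2 * k).factorial) * cos θ ^ 2, by fun_prop⟩
  have hterm : ∀ k θ, |f k θ| ≤ |z| ^ (2 * k) / (2 * k).factorial := by
    intro k θ
    have h1 : |sin θ| ^ (2 * k) ≤ 1 := pow_le_one₀ (abs_nonneg _) (abs_sin_le_one θ)
    have h2 : |cos θ| ^ 2 ≤ 1 := pow_le_one₀ (abs_nonneg _) (abs_cos_le_one θ)
    have hfac : (0 : ℝ) < (2 * k).factorial := by positivity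
    simp only [f, ContinuousMap.coe_mk, abs_mul, abs_div, abs_pow, abs_neg, abs_one, one_pow,
      one_mul, Nat.abs_cast, mul_pow]
    calc |z| ^ (2 * k) * |sin θ| ^ (2 * k) / (2 * k).factorial * |cos θ| ^ 2
        ≤ |z| ^ (2 * k) * 1 / (2 * k).factorial * 1 := by gcongr
      _ = _ := by ring
  have hsum : Summable fun k : ℕ => |z| ^ (2 * k) / ((2 * k).factorial : ℝ) :=
    (Real.summable_pow_div_factorial |z|).comp_injective
      (fun a b h => by simpa using h : Function.Injective fun k : ℕ => 2 * k)
  have hs := intervalIntegral.hasSum_intervalIntegral_of_summable_norm (a := 0) (b := π) (f := f)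
    (by
      refine Summable.of_nonneg_of_le (fun _ => norm_nonneg _) (fun k => ?_) hsum
      rw [ContinuousMap.norm_le _ (by positivity)]
      intro θ
      exact hterm k θ)
  have hcos : ∀ θ, ∑' k, f k θ = cos (z * sin θ) * cos θ ^ 2 := fun θ =>
    ((Real.hasSum_cos (z * sin θ)).mul_right _).tsum_eq
  simp only [hcos] at hs
  have hint : ∀ k, ∫ θ in (0 : ℝ)..π, f k θ
      = π * (((-1) ^ k / ((k.factorial : ℝ) * (k + 1).factorial)) * (z / 2) ^ (2 * k) / 2) := by
    intro k
    have hP : ∀ k : ℕ, ∏ i ∈ Finset.range k, (2 * (i : ℝ) + 1) / (2 * i + 2)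
        = ((2 * k).factorial : ℝ) / (4 ^ k * (k.factorial : ℝ) ^ 2) := by
      intro k
      induction k with
      | zero => simp
      | succ k ih =>
        rw [Finset.prod_range_succ, ih, show 2 * (k + 1) = 2 * k + 1 + 1 by ring]
        simp only [Nat.factorial_succ]
        push_cast
        field_simp
        ring
    have h1 : ∀ θ, f k θ = ((-1) ^ k * z ^ (2 * k) / (2 * k).factorial) *
        (sin θ ^ (2 * k) - sin θ ^ (2 * (k + 1))) := by
      intro θ
      simp only [f, ContinuousMap.coe_mk]
      rw [cos_sq']
      ring
    simp only [h1]
    rw [intervalIntegral.integral_const_mul, intervalIntegral.integral_sub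
      (Continuous.intervalIntegrable (by fun_prop) _ _)
      (Continuous.intervalIntegrable (by fun_prop) _ _),
      integral_sin_pow_even, integral_sin_pow_even, hP, hP,
      show 2 * (k + 1) = 2 * k + 1 + 1 by ring, div_pow, pow_mul 2 2 k]
    simp only [Nat.factorial_succ]
    push_cast
    norm_num
    field_simp
    ring
  simp only [hint] at hs
  rw [← (hs.mul_left (z / π)).tsum_eq, J1]
  refine tsum_congr fun k => ?_
  field_simp
  ring

lemma J1_continuous : Continuous J1 := by
  have : J1 = fun z => z / π * ∫ θ in (0 : ℝ)..π, cos (z * sin θ) * cos θ ^ 2 :=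
    funext J1_eq_integral
  have h : Continuous fun z : ℝ => ∫ θ in (0 : ℝ)..π, cos (z * sin θ) * cos θ ^ 2 :=
    intervalIntegral.continuous_parametric_intervalIntegral_of_continuous'
      (by simp only [Function.uncurry_def]; fun_prop) _ _
  rw [this]
  exact (continuous_id.div_const _).mul h

lemma abs_J1_le (z : ℝ) : |J1 z| ≤ |z| / 2 := by
  rw [J1_eq_integral, abs_mul, abs_div, abs_of_pos pi_pos]
  have h : |∫ θ in (0 : ℝ)..π, cos (z * sin θ) * cos θ ^ 2| ≤ ∫ θ in (0 : ℝ)..π, cos θ ^ 2 := by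
    refine intervalIntegral.norm_integral_le_of_norm_le (μ := volume)
      (f := fun θ => cos (z * sin θ) * cos θ ^ 2) (g := fun θ => cos θ ^ 2) pi_pos.le ?_
      (Continuous.intervalIntegrable (by fun_prop) _ _)
    refine Eventually.of_forall fun θ _ => ?_
    rw [norm_mul, norm_of_nonneg (sq_nonneg (cos θ))]
    exact mul_le_of_le_one_left (sq_nonneg _) (abs_cos_le_one _)
  have h2 : ∫ θ in (0 : ℝ)..π, cos θ ^ 2 = π / 2 := by simp [integral_cos_sq]
  rw [h2] at h
  calc |z| / π * |∫ θ in (0 : ℝ)..π, cos (z * sin θ) * cos θ ^ 2|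
      ≤ |z| / π * (π / 2) := by gcongr
    _ = |z| / 2 := by field_simp

/-! ### Lipschitz bounds for the kernel -/

/-- The Gaussian factor `exp (-r² / (4 s) - a s)` of the kernel, where `r = |u| / √ε`. -/
noncomputable def gauss (ε a u s : ℝ) : ℝ :=
  exp (-(|u| / √ε) ^ 2 / (4 * s) - a * s)

lemma gauss_eq {ε : ℝ} (hε : 0 < ε) (a u s : ℝ) :
    gauss ε a u s = exp (-(u ^ 2 / (4 * ε * s)) - a * s) := by
  rw [gauss, div_pow, sq_abs, sq_sqrt hε.le]
  congr 2
  rw [neg_div, div_div]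
  ring_nf

lemma gauss_hasDerivAt {ε : ℝ} (hε : 0 < ε) (a u s : ℝ) :
    HasDerivAt (fun u => gauss ε a u s)
      (-(2 * u / (4 * ε * s)) * exp (-(u ^ 2 / (4 * ε * s))) * exp (-(a * s))) u := by
  simp only [gauss_eq hε]
  have h := ((((hasDerivAt_pow 2 u).div_const (4 * ε * s)).neg).sub_const (a * s)).exp
  refine h.congr_deriv ?_
  simp only [sub_eq_add_neg, exp_add, Pi.neg_apply, Nat.cast_ofNat, Nat.add_one_sub_one, pow_one]
  ring

/-- If `R ≤ |w|` along the segment from `p` to `q`, the Gaussian factor is Lipschitz there;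
the first constant retains the size of `|w| ≤ S`, the second is independent of it. -/
lemma gauss_lip {ε s R : ℝ} (hε : 0 < ε) (hs : 0 < s) (hR : 0 ≤ R) (a : ℝ) {p q : ℝ}
    (hpq : ∀ w ∈ uIcc p q, R ≤ |w|) :
    (∀ S, (∀ w ∈ uIcc p q, |w| ≤ S) →
      |gauss ε a q s - gauss ε a p s|
        ≤ 2 * S / (4 * ε * s + R ^ 2) * exp (-(a * s)) * |q - p|) ∧
    √s * |gauss ε a q s - gauss ε a p s|
        ≤ √s * (4 * √(ε * s) / (4 * ε * s + R ^ 2)) * exp (-(a * s)) * |q - p| := by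
  have hes : 0 < ε * s := mul_pos hε hs
  have hd : ∀ w ∈ uIcc p q, |2 * w / (4 * ε * s)| * exp (-(w ^ 2 / (4 * ε * s)))
      ≤ 2 * |w| / (4 * ε * s + w ^ 2) := by
    intro w _
    have h1 : exp (-(w ^ 2 / (4 * ε * s))) ≤ (1 + w ^ 2 / (4 * ε * s))⁻¹ := by
      rw [exp_neg]
      gcongr
      rw [add_comm]
      exact add_one_le_exp _
    rw [abs_div, abs_mul, abs_two, abs_of_pos (show 0 < 4 * ε * s by linarith)]
    calc 2 * |w| / (4 * ε * s) * exp (-(w ^ 2 / (4 * ε * s)))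
        ≤ 2 * |w| / (4 * ε * s) * (1 + w ^ 2 / (4 * ε * s))⁻¹ := by gcongr
      _ = 2 * |w| / (4 * ε * s + w ^ 2) := by field_simp
  have hd' : ∀ w ∈ uIcc p q, |2 * w / (4 * ε * s)| * exp (-(w ^ 2 / (4 * ε * s)))
      ≤ 4 * √(ε * s) / (4 * ε * s + R ^ 2) := by
    intro w hw
    -- with `v = |w| / √(4 ε s)` this is `v * exp (-v²) ≤ 1 / (1 + v²)`
    set v := |w| / (2 * √(ε * s)) with hv
    have hsq : 0 < √(ε * s) := sqrt_pos.2 hes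
    have hv2 : w ^ 2 / (4 * ε * s) = v ^ 2 := by
      rw [hv, div_pow, mul_pow, sq_abs, sq_sqrt hes.le]
      ring
    have h1 : v * exp (-v ^ 2) ≤ (1 + v ^ 2)⁻¹ := by
      rw [exp_neg, ← div_eq_mul_inv, div_le_iff₀ (exp_pos _), ← div_eq_inv_mul,
        le_div_iff₀ (by positivity)]
      refine le_trans ?_ (quadratic_le_exp_of_nonneg (sq_nonneg v))
      nlinarith [sq_nonneg (v - 1), mul_nonneg (sq_nonneg v) (sq_nonneg (v - 1)), sq_nonneg v]
    have hwv : |2 * w / (4 * ε * s)| = v / √(ε * s) := by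
      rw [abs_div, abs_mul, abs_two, abs_of_pos (show 0 < 4 * ε * s by linarith), hv, div_div,
        show 2 * √(ε * s) * √(ε * s) = 2 * (ε * s) by
          rw [mul_assoc, mul_self_sqrt hes.le]]
      field_simp
      ring
    rw [hwv, hv2]
    have hRw : R ^ 2 ≤ w ^ 2 := by
      rw [← sq_abs w]
      exact pow_le_pow_left₀ hR (hpq w hw) 2
    have hw2 : w ^ 2 = 4 * (ε * s) * v ^ 2 := by
      rw [← hv2]
      field_simp
    calc v / √(ε * s) * exp (-v ^ 2) = (v * exp (-v ^ 2)) / √(ε * s) := by ring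
      _ ≤ (1 + v ^ 2)⁻¹ / √(ε * s) := by gcongr
      _ = 4 * √(ε * s) / (4 * ε * s + w ^ 2) := by
        rw [hw2]
        have : √(ε * s) ^ 2 = ε * s := sq_sqrt hes.le
        field_simp
        rw [this]
      _ ≤ 4 * √(ε * s) / (4 * ε * s + R ^ 2) := by gcongr
  have main : ∀ D, (∀ w ∈ uIcc p q, |2 * w / (4 * ε * s)| * exp (-(w ^ 2 / (4 * ε * s))) ≤ D) →
      |gauss ε a q s - gauss ε a p s| ≤ D * exp (-(a * s)) * |q - p| := by
    intro D hD
    refine Convex.norm_image_sub_le_of_norm_hasDerivWithin_le (f := fun u => gauss ε a u s)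
      (fun w _ => (gauss_hasDerivAt hε a w s).hasDerivWithinAt) ?_ (convex_uIcc p q)
      left_mem_uIcc right_mem_uIcc
    intro w hw
    rw [norm_mul, norm_mul, norm_neg, norm_of_nonneg (exp_pos _).le,
      norm_of_nonneg (exp_pos _).le]
    exact mul_le_mul_of_nonneg_right (hD w hw) (exp_pos _).le
  refine ⟨fun S hS => main _ fun w hw => (hd w hw).trans ?_, ?_⟩
  · have hRw : R ^ 2 ≤ w ^ 2 := by
      rw [← sq_abs w]
      exact pow_le_pow_left₀ hR (hpq w hw) 2
    have hSw := hS w hw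
    have hS0 := (abs_nonneg w).trans hSw
    gcongr
  · rw [mul_assoc, mul_assoc, ← mul_assoc _ (exp _)]
    gcongr
    exact main _ hd'

/-- The integrand of the memory term of the kernel. -/
noncomputable def memInt (ε a b β u t y : ℝ) : ℝ :=
  gauss ε a u y / √(t - y) * exp (-β * (t - y)) * J1 (2 * √(b * y * (t - y)))

lemma bessel_weight_le {b y t : ℝ} (hb : 0 ≤ b) (hy : 0 ≤ y) :
    |J1 (2 * √(b * y * (t - y)))| / √(t - y) ≤ √b * √y := by
  refine div_le_of_le_mul₀ (sqrt_nonneg _) (by positivity) ?_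
  refine (abs_J1_le _).trans_eq ?_
  rw [abs_of_nonneg (by positivity), sqrt_mul (mul_nonneg hb hy), sqrt_mul hb]
  ring

lemma memInt_integrable {ε a b β : ℝ} (hε : 0 < ε) (ha : 0 < a) (hb : 0 < b) (hβ : 0 < β)
    (u : ℝ) {t : ℝ} (ht : 0 < t) :
    IntervalIntegrable (memInt ε a b β u t) volume 0 t := by
  refine IntervalIntegrable.mono_fun (intervalIntegrable_const (c := √b * √t)) ?_ ?_
  · have : Measurable (memInt ε a b β u t) := by
      have := J1_continuous.measurable
      unfold memInt gauss
      fun_prop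
    exact this.aestronglyMeasurable
  · rw [uIoc_of_le ht.le]
    refine (ae_restrict_mem measurableSet_Ioc).mono fun y hy => ?_
    have h1 := bessel_weight_le (t := t) hb.le hy.1.le
    have h2 : gauss ε a u y ≤ 1 := by
      rw [gauss_eq hε, exp_le_one_iff]
      have := hy.1
      have : 0 ≤ u ^ 2 / (4 * ε * y) := by positivity
      have : 0 < a * y := by positivity
      linarith
    have h3 : exp (-β * (t - y)) ≤ 1 := by
      rw [exp_le_one_iff]
      have := mul_nonneg hβ.le (sub_nonneg.2 hy.2)
      linarith
    have h0 : 0 ≤ gauss ε a u y := (exp_pos _).le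
    have h4 : √y ≤ √t := sqrt_le_sqrt hy.2
    simp only [memInt, norm_mul, norm_div, Real.norm_eq_abs, abs_of_nonneg h0,
      abs_of_nonneg (sqrt_nonneg _), abs_of_pos (exp_pos _)]
    calc gauss ε a u y / √(t - y) * exp (-β * (t - y)) * |J1 (2 * √(b * y * (t - y)))|
        = gauss ε a u y * exp (-β * (t - y)) *
          (|J1 (2 * √(b * y * (t - y)))| / √(t - y)) := by ring
      _ ≤ 1 * 1 * (√b * √y) := by gcongr
      _ ≤ √b * √t := by rw [one_mul, one_mul]; gcongr

/-- Lipschitz bounds for the Gaussian factor, at time `t` and weighted by `√s` for `s ≤ t`, pass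
to the kernel: the bound on `J1` cancels the singularity `1 / √(t - y)`. -/
lemma Kfun_lip {ε a b β : ℝ} (hε : 0 < ε) (ha : 0 < a) (hb : 0 < b) (hβ : 0 < β)
    {t p q D₁ D₂ : ℝ} (ht : 0 < t) (hD₂ : 0 ≤ D₂)
    (h₁ : |gauss ε a q t - gauss ε a p t| ≤ D₁ * |q - p|)
    (h₂ : ∀ s, 0 < s → s ≤ t →
      √s * |gauss ε a q s - gauss ε a p s| ≤ D₂ * exp (-(a * s)) * |q - p|) :
    |Kfun ε a b β q t - Kfun ε a b β p t|
      ≤ 1 / (2 * √(π * ε)) * (D₁ / √t + b * √b * D₂ * t * exp (-(min a β * t))) * |q - p| := by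
  have hK : ∀ u, Kfun ε a b β u t = 1 / (2 * √(π * ε)) *
      (gauss ε a u t / √t - b * ∫ y in (0 : ℝ)..t, memInt ε a b β u t y) := fun u => rfl
  have hI : |(∫ y in (0 : ℝ)..t, memInt ε a b β q t y) - ∫ y in (0 : ℝ)..t, memInt ε a b β p t y|
      ≤ √b * D₂ * exp (-(min a β * t)) * |q - p| * t := by
    rw [← intervalIntegral.integral_sub (memInt_integrable hε ha hb hβ q ht)
      (memInt_integrable hε ha hb hβ p ht)]
    have := intervalIntegral.norm_integral_le_of_norm_le_const (a := 0) (b := t)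
      (f := fun y => memInt ε a b β q t y - memInt ε a b β p t y)
      (C := √b * D₂ * exp (-(min a β * t)) * |q - p|) ?_
    · simpa [abs_of_pos ht] using this
    intro y hy
    rw [uIoc_of_le ht.le] at hy
    have e1 := bessel_weight_le (t := t) hb.le hy.1.le
    have e2 := h₂ y hy.1 hy.2
    have e3 : exp (-(a * y)) * exp (-β * (t - y)) ≤ exp (-(min a β * t)) := by
      rw [← exp_add, exp_le_exp]
      have := mul_le_mul_of_nonneg_right (min_le_left a β) hy.1.le
      have := mul_le_mul_of_nonneg_right (min_le_right a β) (sub_nonneg.2 hy.2)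
      linarith
    have e4 : memInt ε a b β q t y - memInt ε a b β p t y
        = (gauss ε a q y - gauss ε a p y) * exp (-β * (t - y)) *
          (J1 (2 * √(b * y * (t - y))) / √(t - y)) := by
      unfold memInt
      ring
    rw [e4, norm_mul, norm_mul, norm_div, norm_of_nonneg (exp_pos _).le,
      norm_of_nonneg (sqrt_nonneg _)]
    simp only [Real.norm_eq_abs]
    calc |gauss ε a q y - gauss ε a p y| * exp (-β * (t - y)) *
          (|J1 (2 * √(b * y * (t - y)))| / √(t - y))
        ≤ |gauss ε a q y - gauss ε a p y| * exp (-β * (t - y)) * (√b * √y) := by gcongr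
      _ = √b * exp (-β * (t - y)) * (√y * |gauss ε a q y - gauss ε a p y|) := by ring
      _ ≤ √b * exp (-β * (t - y)) * (D₂ * exp (-(a * y)) * |q - p|) := by gcongr
      _ = √b * D₂ * (exp (-(a * y)) * exp (-β * (t - y))) * |q - p| := by ring
      _ ≤ √b * D₂ * exp (-(min a β * t)) * |q - p| := by gcongr
  rw [hK, hK, ← mul_sub, abs_mul, abs_of_nonneg (by positivity), mul_assoc]
  refine mul_le_mul_of_nonneg_left ?_ (by positivity)
  set I := ∫ y in (0 : ℝ)..t, memInt ε a b β q t y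
  set J := ∫ y in (0 : ℝ)..t, memInt ε a b β p t y
  calc |gauss ε a q t / √t - b * I - (gauss ε a p t / √t - b * J)|
      = |(gauss ε a q t - gauss ε a p t) / √t - b * (I - J)| := by ring_nf
    _ ≤ |(gauss ε a q t - gauss ε a p t) / √t| + |b * (I - J)| := abs_sub _ _
    _ = |gauss ε a q t - gauss ε a p t| / √t + b * |I - J| := by
      rw [abs_div, abs_mul, abs_of_nonneg (sqrt_nonneg t), abs_of_pos hb]
    _ ≤ D₁ * |q - p| / √t + b * (√b * D₂ * exp (-(min a β * t)) * |q - p| * t) := by gcongr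
    _ = _ := by ring

/-- Kernel estimate away from the singularity at `x = 0`. -/
lemma Kfun_lip_far {ε a b β : ℝ} (hε : 0 < ε) (ha : 0 < a) (hb : 0 < b) (hβ : 0 < β)
    {t p q R : ℝ} (ht : 0 < t) (hR : 0 < R) (hpq : ∀ w ∈ uIcc p q, R ≤ |w|) :
    |Kfun ε a b β q t - Kfun ε a b β p t|
      ≤ 1 / (2 * √(π * ε)) * (4 * √ε * (1 + b * √b * t ^ 2) * exp (-(min a β * t)) / R ^ 2)
        * |q - p| := by
  have hG : ∀ s, 0 < s → √s * (4 * √(ε * s) / (4 * ε * s + R ^ 2)) ≤ 4 * √ε * s / R ^ 2 := by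
    intro s hs
    have : √s * (4 * √(ε * s) / (4 * ε * s + R ^ 2)) = 4 * √ε * s / (4 * ε * s + R ^ 2) := by
      rw [sqrt_mul hε.le]
      have := mul_self_sqrt hs.le
      linear_combination (4 * √ε / (4 * ε * s + R ^ 2)) * this
    rw [this]
    have : 0 < 4 * ε * s := by positivity
    gcongr
    linarith
  have h := Kfun_lip hε ha hb hβ (q := q) (p := p)
    (D₁ := 4 * √ε * √t / R ^ 2 * exp (-(a * t))) (D₂ := 4 * √ε * t / R ^ 2) ht (by positivity)
    ?_ ?_
  · refine h.trans ?_
    have e : exp (-(a * t)) ≤ exp (-(min a β * t)) := by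
      rw [exp_le_exp]
      have := mul_le_mul_of_nonneg_right (min_le_left a β) ht.le
      linarith
    have hst : √t ≠ 0 := (sqrt_pos.2 ht).ne'
    gcongr
    calc 4 * √ε * √t / R ^ 2 * exp (-(a * t)) / √t
          + b * √b * (4 * √ε * t / R ^ 2) * t * exp (-(min a β * t))
        = 4 * √ε / R ^ 2 * exp (-(a * t))
          + b * √b * (4 * √ε * t / R ^ 2) * t * exp (-(min a β * t)) := by
          congr 1
          field_simp
      _ ≤ 4 * √ε / R ^ 2 * exp (-(min a β * t))
          + b * √b * (4 * √ε * t / R ^ 2) * t * exp (-(min a β * t)) := by gcongr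
      _ = _ := by ring
  · have h := (gauss_lip hε ht hR.le a hpq).2
    have hst : 0 < √t := sqrt_pos.2 ht
    rw [← mul_le_mul_iff_right₀ hst]
    refine h.trans ?_
    calc √t * (4 * √(ε * t) / (4 * ε * t + R ^ 2)) * exp (-(a * t)) * |q - p|
        ≤ 4 * √ε * t / R ^ 2 * exp (-(a * t)) * |q - p| := by
          gcongr
          exact hG t ht
      _ = _ := by
          have := mul_self_sqrt ht.le
          linear_combination -(4 * √ε / R ^ 2 * exp (-(a * t)) * |q - p|) * this
  · intro s hs hst
    refine (gauss_lip hε hs hR.le a hpq).2.trans ?_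
    gcongr
    exact (hG s hs).trans (by gcongr)

/-- Kernel estimate near the singularity at `x = 0`. -/
lemma Kfun_lip_near {ε a b β : ℝ} (hε : 0 < ε) (ha : 0 < a) (hb : 0 < b) (hβ : 0 < β)
    {t x q : ℝ} (ht : 0 < t) (hx : 0 < x) (hq : |q - x| ≤ x / 2) :
    |Kfun ε a b β q t - Kfun ε a b β x t|
      ≤ 1 / (2 * √(π * ε)) * (2 * (3 * x / 2) / (4 * ε * t + (x / 2) ^ 2) / √t
        + b * √b * (1 / √ε) * t * exp (-(min a β * t))) * |q - x| := by
  have hw : ∀ w ∈ uIcc x q, x / 2 ≤ w ∧ w ≤ 3 * x / 2 := by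
    intro w hw
    have h := abs_le.1 hq
    rcases mem_uIcc.1 hw with h' | h' <;> constructor <;> linarith
  have hw0 : ∀ w ∈ uIcc x q, |w| = w := fun w h => abs_of_nonneg (by linarith [(hw w h).1])
  have hlip := fun s hs => gauss_lip (s := s) hε hs (by positivity : 0 ≤ x / 2) a
    (fun w h => by rw [hw0 w h]; exact (hw w h).1)
  refine Kfun_lip hε ha hb hβ ht (by positivity) ?_ ?_
  · refine ((hlip t ht).1 (3 * x / 2) fun w h => by rw [hw0 w h]; exact (hw w h).2).trans ?_
    refine mul_le_mul_of_nonneg_right ?_ (abs_nonneg _)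
    refine mul_le_of_le_one_right (by positivity) ?_
    rw [exp_le_one_iff]
    have := mul_pos ha ht
    linarith
  · intro s hs _
    refine (hlip s hs).2.trans ?_
    gcongr
    rw [sqrt_mul hε.le]
    have h1 := mul_self_sqrt hs.le
    have h2 := mul_self_sqrt hε.le
    have hse := sqrt_pos.2 hε
    calc √s * (4 * (√ε * √s) / (4 * ε * s + (x / 2) ^ 2))
        = 4 * √ε * s / (4 * ε * s + (x / 2) ^ 2) := by
          linear_combination (4 * √ε / (4 * ε * s + (x / 2) ^ 2)) * h1
      _ ≤ 4 * √ε * s / (4 * ε * s) := by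
          gcongr
          have := sq_nonneg (x / 2)
          linarith
      _ = 1 / √ε := by
          field_simp
          linear_combination h2

/-! ### The theta function and its integral in time -/

/-- The part of the bound that concentrates at `t = 0` as `x → 0`: it is the `t`-derivative of
`(6 / √ε) * arctan (√t / c)` with `c = x / (4 √ε)`, so its integral does not depend on `x`. -/
lemma near_integral {ε x : ℝ} (hε : 0 < ε) (hx : 0 < x) :
    IntegrableOn (fun t => 2 * (3 * x / 2) / (4 * ε * t + (x / 2) ^ 2) / √t) (Ioi 0) ∧
    ∫ t in Ioi (0 : ℝ), 2 * (3 * x / 2) / (4 * ε * t + (x / 2) ^ 2) / √t = 3 * π / √ε := by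
  have hse := sqrt_pos.2 hε
  set c := x / (4 * √ε) with hc
  have hc0 : 0 < c := by positivity
  have hcont : ContinuousWithinAt (fun t => 6 / √ε * arctan (√t / c)) (Ici 0) 0 :=
    Continuous.continuousWithinAt (by fun_prop)
  have hder : ∀ t ∈ Ioi (0 : ℝ), HasDerivAt (fun t => 6 / √ε * arctan (√t / c))
      (2 * (3 * x / 2) / (4 * ε * t + (x / 2) ^ 2) / √t) t := by
    intro t ht
    have ht : 0 < t := ht
    have hst := sqrt_pos.2 ht
    refine ((((hasDerivAt_sqrt ht.ne').div_const c).arctan).const_mul (6 / √ε)).congr_deriv ?_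
    rw [div_pow, sq_sqrt ht.le]
    have hcx : x = 4 * √ε * c := by rw [hc]; field_simp
    have he : ε = √ε ^ 2 := (sq_sqrt hε.le).symm
    rw [hcx]
    generalize √ε = e at *
    subst he
    have : 0 < c ^ 2 + t := by positivity
    have : 0 < 4 * e ^ 2 * t + (4 * e * c / 2) ^ 2 := by positivity
    field_simp
    ring
  have hnn : ∀ t ∈ Ioi (0 : ℝ), 0 ≤ 2 * (3 * x / 2) / (4 * ε * t + (x / 2) ^ 2) / √t := by
    intro t ht
    have ht : 0 < t := ht
    positivity
  have hlim : Tendsto (fun t => 6 / √ε * arctan (√t / c)) atTop (𝓝 (6 / √ε * (π / 2))) :=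
    ((tendsto_nhds_of_tendsto_nhdsWithin tendsto_arctan_atTop).comp
      (tendsto_sqrt_atTop.atTop_div_const hc0)).const_mul _
  refine ⟨integrableOn_Ioi_deriv_of_nonneg hcont hder hnn hlim, ?_⟩
  rw [integral_Ioi_of_hasDerivAt_of_nonneg hcont hder hnn hlim]
  simp
  ring

lemma integrableOn_pow_mul_exp {c : ℝ} (hc : 0 < c) (k : ℕ) :
    IntegrableOn (fun t : ℝ => t ^ k * exp (-(c * t))) (Ioi 0) := by
  have h : (-1 : ℝ) < k := lt_of_lt_of_le (by norm_num) k.cast_nonneg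
  simpa using integrableOn_rpow_mul_exp_neg_mul_rpow h one_pos hc

/-- No summability of `f` and `g` is needed: they are summable together, and otherwise both sums
take the junk value `0`. -/
lemma abs_tsum_sub_tsum_le {ι : Type*} {f g M : ι → ℝ} {S : ℝ} (hM : HasSum M S)
    (h : ∀ i, |f i - g i| ≤ M i) : |∑' i, f i - ∑' i, g i| ≤ S := by
  have hd : Summable fun i => f i - g i := Summable.of_norm_bounded hM.summable h
  by_cases hg : Summable g
  · have hf : Summable f := by simpa using hd.add hg
    rw [← hf.tsum_sub hg]
    exact tsum_of_norm_bounded (f := fun i => f i - g i) hM h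
  · have hf : ¬ Summable f := fun hf => hg (by simpa using hf.sub hd)
    rw [tsum_eq_zero_of_not_summable hf, tsum_eq_zero_of_not_summable hg, sub_zero, abs_zero]
    exact hM.nonneg fun i => (abs_nonneg _).trans (h i)

/-- Pointwise bound on `θ_x`: the image `n = 0` contributes the first two terms, all the other
images together the last one. -/
lemma abs_thetaX_le {ε a b β L : ℝ} (hε : 0 < ε) (ha : 0 < a) (hb : 0 < b) (hβ : 0 < β)
    (hL : 0 < L) {x t : ℝ} (hx : 0 < x) (hxL : x ≤ L) (ht : 0 < t) :
    |thetaX ε a b β L x t| ≤ 1 / (2 * √(π * ε)) *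
      (2 * (3 * x / 2) / (4 * ε * t + (x / 2) ^ 2) / √t
        + b * √b * (1 / √ε) * t * exp (-(min a β * t)))
      + 1 / (2 * √(π * ε)) * (4 * √ε * (1 + b * √b * t ^ 2) * exp (-(min a β * t)) / (L / 2) ^ 2)
        * ∑' n : ℤ, 1 / (n : ℝ) ^ 2 := by
  set A := 1 / (2 * √(π * ε)) * (2 * (3 * x / 2) / (4 * ε * t + (x / 2) ^ 2) / √t
        + b * √b * (1 / √ε) * t * exp (-(min a β * t))) with hA
  set B := 1 / (2 * √(π * ε)) * (4 * √ε * (1 + b * √b * t ^ 2) * exp (-(min a β * t))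
    / (L / 2) ^ 2) with hB
  have hsum : HasSum (fun n : ℤ => (if n = 0 then A else 0) + B * (1 / (n : ℝ) ^ 2))
      (A + B * ∑' n : ℤ, 1 / (n : ℝ) ^ 2) :=
    (hasSum_ite_eq 0 A).add ((summable_one_div_int_pow.2 one_lt_two).hasSum.mul_left B)
  have hA0 : 0 ≤ A := by positivity
  have hB0 : 0 ≤ B := by positivity
  have hS0 : 0 ≤ ∑' n : ℤ, 1 / (n : ℝ) ^ 2 := tsum_nonneg fun n => by positivity
  refine norm_deriv_le_of_lip' (f := fun y => theta ε a b β L y t) (by positivity) ?_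
  filter_upwards [Metric.closedBall_mem_nhds x (half_pos hx)] with q hq
  rw [Metric.mem_closedBall, Real.dist_eq] at hq
  refine abs_tsum_sub_tsum_le (hsum.mul_right ‖q - x‖) fun n => ?_
  rw [Real.norm_eq_abs]
  rcases eq_or_ne n 0 with rfl | hn
  · have h := Kfun_lip_near hε ha hb hβ ht hx hq
    rw [← hA] at h
    simpa using h
  · have hn1 : (1 : ℝ) ≤ |(n : ℝ)| := by exact_mod_cast Int.one_le_abs hn
    have hn0 : 0 < |(n : ℝ)| := by linarith
    have h := Kfun_lip_far hε ha hb hβ (R := |(n : ℝ)| * (L / 2)) ht (by positivity)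
      (p := x + 2 * (n : ℝ) * L) (q := q + 2 * (n : ℝ) * L) ?_
    · rw [add_sub_add_right_eq_sub, mul_pow, sq_abs] at h
      refine h.trans_eq ?_
      have hn' : (n : ℝ) ≠ 0 := by exact_mod_cast hn
      rw [if_neg hn, zero_add, hB]
      field_simp
    · intro w hw
      have hq' := abs_le.1 hq
      -- translate back: `w - 2 n L` lies in `[0, 3 L / 2]`
      have hw' : |w - 2 * n * L| ≤ 3 * L / 2 := by
        rw [abs_le]
        rcases mem_uIcc.1 hw with h' | h' <;> constructor <;> linarith
      have h2 : |2 * (n : ℝ) * L| = 2 * |(n : ℝ)| * L := by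
        rw [abs_mul, abs_mul, abs_two, abs_of_pos hL]
      have h3 : |2 * (n : ℝ) * L| ≤ |w| + |w - 2 * n * L| := by
        have := abs_sub w (w - 2 * n * L)
        rwa [sub_sub_cancel] at this
      nlinarith

/-- there is `C > 0` (depending only on `a, ε, b, β, L`) with
`∫₀^∞ |θ_x(x,τ)| dτ ≤ C` for all `0 < x ≤ L`. -/
theorem thetaX_integral_bounded (ε a b β L : ℝ)
    (hε : 0 < ε) (ha : 0 < a) (hb : 0 < b) (hβ : 0 < β) (hL : 0 < L) :
    ∃ C : ℝ, 0 < C ∧ ∀ x : ℝ, 0 < x → x ≤ L →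
      (∫ τ in Set.Ioi (0:ℝ), |thetaX ε a b β L x τ|) ≤ C := by
  set S := ∑' n : ℤ, 1 / (n : ℝ) ^ 2
  set γ := min a β
  have hγ : 0 < γ := lt_min ha hβ
  set k := 1 / (2 * √(π * ε))
  -- the part of the majorant that does not depend on `x`
  set Q : ℝ → ℝ := fun t => k * (b * √b * (1 / √ε) * t * exp (-(γ * t)))
    + k * (4 * √ε * (1 + b * √b * t ^ 2) * exp (-(γ * t)) / (L / 2) ^ 2) * S with hQ
  have hQi : IntegrableOn Q (Ioi 0) := by
    have h0 := (integrableOn_pow_mul_exp hγ 0).const_mul (k * (4 * √ε) / (L / 2) ^ 2 * S)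
    have h1 := (integrableOn_pow_mul_exp hγ 1).const_mul (k * (b * √b * (1 / √ε)))
    have h2 := (integrableOn_pow_mul_exp hγ 2).const_mul
      (k * (4 * √ε) * (b * √b) / (L / 2) ^ 2 * S)
    refine ((h0.add h1).add h2).congr (Eventually.of_forall fun t => ?_)
    simp only [hQ, Pi.add_apply]
    ring
  refine ⟨max 1 (k * (3 * π / √ε) + ∫ t in Ioi (0 : ℝ), Q t),
    lt_of_lt_of_le one_pos (le_max_left _ _), fun x hx hxL => le_trans ?_ (le_max_right _ _)⟩
  obtain ⟨hPi, hP⟩ := near_integral hε hx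
  rw [← hP, ← MeasureTheory.integral_const_mul,
    ← MeasureTheory.integral_add (hPi.const_mul k) hQi]
  refine integral_mono_of_nonneg (Eventually.of_forall fun t => abs_nonneg _)
    ((hPi.const_mul k).add hQi) ?_
  refine (ae_restrict_mem measurableSet_Ioi).mono fun t ht => ?_
  refine (abs_thetaX_le hε ha hb hβ hL hx hxL ht).trans_eq ?_
  simp only [hQ]
  ring
end

section
/- Let h and χ be continuous functions on [0,∞) such that the limits h(∞) = lim_{t→∞} h(t) and χ(∞) = lim_{t→∞} χ(t) exist, h is continuously differentiable on [0,∞), and the derivative h' is (Lebesgue) integrable on [0,∞). Then lim_{t→∞} ∫₀^t χ(t − τ) · h'(τ) dτ = χ(∞) · ( h(∞) − h(0) ). -/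
/-!
Extend the integrand by zero to `(0, ∞)`: the integral over `[0, t]` becomes
`∫ τ in Ioi 0, 1_{τ ≤ t} χ(t - τ) h'(τ)`. Since `χ` is continuous with a limit at infinity, it is
bounded on `[0, ∞)` by some `M`, so the integrands are dominated by `M |h'|`. For fixed `τ` they
tend to `χ(∞) h'(τ)`. Dominated convergence gives the limit `χ(∞) ∫ τ in Ioi 0, h'(τ)`, which the
fundamental theorem of calculus on a half-line evaluates.
-/

open Real MeasureTheory Set Filter intervalIntegral

theorem exists_bound_Ici_of_tendsto {χ : ℝ → ℝ} {c : ℝ} (hc : ContinuousOn χ (Set.Ici 0))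
    (hl : Filter.Tendsto χ Filter.atTop (nhds c)) : ∃ M, ∀ x, 0 ≤ x → |χ x| ≤ M := by
  have h1 : ∀ᶠ x in atTop, |χ x| < |c| + 1 := hl.abs.eventually_lt_const (by linarith)
  obtain ⟨N, hN⟩ := eventually_atTop.1 h1
  obtain ⟨C, hC⟩ := (isCompact_Icc (a := (0:ℝ)) (b := N)).exists_bound_of_continuousOn
    (hc.mono Icc_subset_Ici_self)
  refine ⟨max C (|c| + 1), fun x hx => ?_⟩
  rcases le_total x N with h | h
  · exact (hC x ⟨hx, h⟩).trans (le_max_left _ _)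
  · exact (hN x h).le.trans (le_max_right _ _)

/-- if `h, χ` are continuous on `[0,∞)` with finite limits at `∞`,
`h` is continuously differentiable on `[0,∞)` with derivative `h'` integrable on
`[0,∞)`, then `∫₀^t χ(t−τ) h'(τ) dτ → χ(∞)(h(∞) − h(0))` as `t → ∞`. -/
theorem convolution_limit (h χ h' : ℝ → ℝ) (hinf χinf : ℝ)
    (hcont : ContinuousOn h (Set.Ici 0))
    (χcont : ContinuousOn χ (Set.Ici 0))
    (hlim : Filter.Tendsto h Filter.atTop (nhds hinf))
    (χlim : Filter.Tendsto χ Filter.atTop (nhds χinf))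
    (hderiv : ∀ t ∈ Set.Ici (0:ℝ), HasDerivWithinAt h (h' t) (Set.Ici 0) t)
    (h'cont : ContinuousOn h' (Set.Ici 0))
    (h'int : IntegrableOn h' (Set.Ici 0)) :
    Filter.Tendsto (fun t : ℝ => ∫ τ in (0:ℝ)..t, χ (t - τ) * h' τ)
      Filter.atTop (nhds (χinf * (hinf - h 0))) := by
  obtain ⟨M, hM⟩ := exists_bound_Ici_of_tendsto χcont χlim
  have hI : IntegrableOn h' (Set.Ioi 0) := h'int.mono_set Ioi_subset_Ici_self
  have hftc : ∫ τ in Set.Ioi (0:ℝ), χinf * h' τ = χinf * (hinf - h 0) := by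
    rw [MeasureTheory.integral_const_mul]
    congr 1
    exact integral_Ioi_of_hasDerivAt_of_tendsto (hcont 0 self_mem_Ici)
      (fun x hx => (hderiv x (Ioi_subset_Ici_self hx)).hasDerivAt (Ici_mem_nhds hx)) hI hlim
  -- `χ` may fail to be measurable on the negative half-line, so it is replaced by the continuous
  -- function `x ↦ χ (max x 0)`, which agrees with it at all points `t - τ` with `τ ≤ t`.
  have hg : Continuous fun x => χ (max x 0) :=
    χcont.comp_continuous (by fun_prop) fun x => le_max_right x 0
  have key : Tendsto (fun t : ℝ => ∫ τ in Set.Ioi (0:ℝ),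
      (Set.Iic t).indicator (fun τ => χ (max (t - τ) 0) * h' τ) τ) atTop
      (nhds (∫ τ in Set.Ioi (0:ℝ), χinf * h' τ)) := by
    refine MeasureTheory.tendsto_integral_filter_of_dominated_convergence
      (fun τ => M * |h' τ|) ?_ ?_ (hI.abs.const_mul M) ?_
    · refine Eventually.of_forall fun t => AEStronglyMeasurable.indicator ?_ measurableSet_Iic
      exact (hg.comp (continuous_const.sub continuous_id)).aestronglyMeasurable.mul
        hI.aestronglyMeasurable
    · refine Eventually.of_forall fun t => Eventually.of_forall fun τ => ?_
      refine (norm_indicator_le_norm_self _ _).trans ?_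
      rw [norm_mul]
      exact mul_le_mul_of_nonneg_right (hM _ (le_max_right _ _)) (abs_nonneg _)
    · refine Eventually.of_forall fun τ => ?_
      have h1 : Tendsto (fun t : ℝ => χ (t - τ) * h' τ) atTop (nhds (χinf * h' τ)) :=
        (χlim.comp (tendsto_atTop_add_const_right _ (-τ) tendsto_id)).mul_const _
      refine h1.congr' ?_
      filter_upwards [eventually_ge_atTop τ] with t ht
      rw [indicator_of_mem (show τ ∈ Set.Iic t from ht), max_eq_left (sub_nonneg.2 ht)]
  rw [hftc] at key
  refine key.congr' ?_
  filter_upwards [eventually_ge_atTop (0:ℝ)] with t ht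
  rw [setIntegral_indicator measurableSet_Iic, Ioi_inter_Iic,
    intervalIntegral.integral_of_le ht]
  refine setIntegral_congr_fun measurableSet_Ioc fun τ hτ => ?_
  simp only [max_eq_left (sub_nonneg.2 hτ.2)]
end
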